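/- Let n > 0 be a real number, let γ > 0, μ, a₁, a₂ be real constants, and set α = −2/n, β = −(n + 2)/n, a₃ = √(γ/n), κ = a₁²·(1 + 2γμ) and a₄ = −μ·a₁². Then the function u(x,t) = a₂·(sech(a₃·(x − a₁·t)))ⁿ + a₄ (real power of the everywhere-positive function sech) solves equation (1) at every point (x,t) ∈ ℝ². -/

import Mathlib

/-- `u` solves equation (1), the nonlinear fourth order PDE
`u_tt = (κ u + γ u²)_xx + u u_xxxx + μ u_xxtt + α u_x u_xxx + β (u_xx)²`,
at the point `(x, t)`. -/
noncomputable def SolvesEq1 (α β γ κ μ : ℝ) (u : ℝ → ℝ → ℝ) (x t : ℝ) : Prop :=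
  iteratedDeriv 2 (fun s => u x s) t =
    iteratedDeriv 2 (fun y => κ * u y t + γ * (u y t) ^ 2) x
    + u x t * iteratedDeriv 4 (fun y => u y t) x
    + μ * iteratedDeriv 2 (fun y => iteratedDeriv 2 (fun s => u y s) t) x
    + α * deriv (fun y => u y t) x * iteratedDeriv 3 (fun y => u y t) x
    + β * (iteratedDeriv 2 (fun y => u y t) x) ^ 2


lemma hd_congr {f g : ℝ → ℝ} {a b x : ℝ} (h : HasDerivAt g b x) (hf : ∀ z, f z = g z)
    (ha : a = b) : HasDerivAt f a x := by
  rw [funext hf, ha]; exact h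

lemma quad_deriv2 (f f1 f2 : ℝ → ℝ) (κ γ x : ℝ) (h1 : ∀ y, HasDerivAt f (f1 y) y)
    (h2 : ∀ y, HasDerivAt f1 (f2 y) y) :
    iteratedDeriv 2 (fun y => κ * f y + γ * f y ^ 2) x =
      κ * f2 x + 2 * γ * (f1 x * f1 x + f x * f2 x) := by
  have e : deriv (fun y => κ * f y + γ * f y ^ 2)
      = fun y => κ * f1 y + 2 * γ * (f y * f1 y) := by
    funext s
    rw [(((h1 s).const_mul κ).fun_add (((h1 s).fun_pow 2).const_mul γ)).deriv]
    push_cast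
    ring
  rw [iteratedDeriv_succ, iteratedDeriv_one, e]
  exact (((h2 x).const_mul κ).fun_add (((h1 x).fun_mul (h2 x)).const_mul (2 * γ))).deriv

lemma sech_hasDerivAt (n r q A B C D : ℝ) (y : ℝ) :
    HasDerivAt (fun y => (A + B * Real.tanh (r * y + q) + C * Real.tanh (r * y + q) ^ 2
        + D * Real.tanh (r * y + q) ^ 3) * (1 / Real.cosh (r * y + q)) ^ n)
      (r * ((1 - Real.tanh (r * y + q) ^ 2) * (B + 2 * C * Real.tanh (r * y + q)
          + 3 * D * Real.tanh (r * y + q) ^ 2)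
        - n * Real.tanh (r * y + q) * (A + B * Real.tanh (r * y + q)
          + C * Real.tanh (r * y + q) ^ 2 + D * Real.tanh (r * y + q) ^ 3))
        * (1 / Real.cosh (r * y + q)) ^ n) y := by
  have hl : HasDerivAt (fun y : ℝ => r * y + q) r y := by
    simpa using ((hasDerivAt_id y).const_mul r).add_const q
  have hc0 : 0 < Real.cosh (r * y + q) := Real.cosh_pos _
  have hc := hl.cosh
  have hs := hl.sinh
  have hT : HasDerivAt (fun y => Real.tanh (r * y + q))
      (r * (1 - Real.tanh (r * y + q) ^ 2)) y := by
    have := hs.div hc hc0.ne'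
    have e : (fun y => Real.tanh (r * y + q)) =
        (fun y => Real.sinh (r * y + q)) / (fun y => Real.cosh (r * y + q)) := by
      funext z; simp [Real.tanh_eq_sinh_div_cosh]
    rw [e]
    refine hd_congr this (fun _ => rfl) ?_
    rw [Real.tanh_eq_sinh_div_cosh]
    field_simp
  have hS : HasDerivAt (fun y => (1 / Real.cosh (r * y + q)) ^ n)
      (-(n * r * Real.tanh (r * y + q)) * (1 / Real.cosh (r * y + q)) ^ n) y := by
    have h1 : HasDerivAt (fun y => 1 / Real.cosh (r * y + q))
        (-(Real.sinh (r * y + q) * r) / Real.cosh (r * y + q) ^ 2) y := by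
      simpa [one_div] using hc.fun_inv hc0.ne'
    have h2 := h1.rpow_const (p := n) (Or.inl (by positivity))
    refine hd_congr h2 (fun _ => rfl) ?_
    rw [Real.rpow_sub_one (by positivity), Real.tanh_eq_sinh_div_cosh]
    field_simp
  have h := ((((hT.const_mul B).const_add A).fun_add ((hT.fun_pow 2).const_mul C)).fun_add
    ((hT.fun_pow 3).const_mul D)).fun_mul hS
  refine hd_congr h (fun _ => rfl) ?_
  push_cast
  ring

/-- Derivatives of `a * sech^n + b` composed with an affine map. -/
lemma sech_derivs (n r q a b : ℝ) :
    let T := fun y => Real.tanh (r * y + q)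
    let w := fun y => a * (1 / Real.cosh (r * y + q)) ^ n
    let u := fun y => a * (1 / Real.cosh (r * y + q)) ^ n + b
    (∀ y, HasDerivAt u (-n * r * T y * w y) y) ∧
    (∀ y, HasDerivAt (fun y => -n * r * T y * w y)
      (r ^ 2 * (-n + n * (n + 1) * T y ^ 2) * w y) y) ∧
    (∀ y, HasDerivAt (fun y => r ^ 2 * (-n + n * (n + 1) * T y ^ 2) * w y)
      (r ^ 3 * (n * (3 * n + 2) * T y - n * (n + 1) * (n + 2) * T y ^ 3) * w y) y) ∧
    (∀ y, HasDerivAt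
      (fun y => r ^ 3 * (n * (3 * n + 2) * T y - n * (n + 1) * (n + 2) * T y ^ 3) * w y)
      (r ^ 4 * ((1 - T y ^ 2) * (n * (3 * n + 2) - 3 * n * (n + 1) * (n + 2) * T y ^ 2)
        - n * T y * (n * (3 * n + 2) * T y - n * (n + 1) * (n + 2) * T y ^ 3)) * w y) y) := by
  intro T w u
  refine ⟨fun y => ?_, fun y => ?_, fun y => ?_, fun y => ?_⟩
  · refine hd_congr ((sech_hasDerivAt n r q a 0 0 0 y).add_const b) (fun z => ?_) ?_
    · simp only [u]; ring
    · simp only [T, w]; ring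
  · refine hd_congr (sech_hasDerivAt n r q 0 (-n * r * a) 0 0 y) (fun z => ?_) ?_
    · simp only [T, w]; ring
    · simp only [T, w]; ring
  · refine hd_congr (sech_hasDerivAt n r q (-n * r ^ 2 * a) 0 (n * (n + 1) * r ^ 2 * a) 0 y) (fun z => ?_) ?_
    · simp only [T, w]; ring
    · simp only [T, w]; ring
  · refine hd_congr (sech_hasDerivAt n r q 0 (n * (3 * n + 2) * r ^ 3 * a) 0
      (-(n * (n + 1) * (n + 2)) * r ^ 3 * a) y) (fun z => ?_) ?_
    · simp only [T, w]; ring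
    · simp only [T, w]; ring

theorem sechn_soliton_profile_solves_eq1 (n : ℝ) (hn : 0 < n)
    (γ μ a₁ a₂ : ℝ) (hγ : 0 < γ) :
    ∀ x t : ℝ,
      SolvesEq1 (-2 / n) (-(n + 2) / n) γ
        (a₁ ^ 2 * (1 + 2 * γ * μ)) μ
        (fun x t =>
          a₂ * (1 / Real.cosh (Real.sqrt (γ / n) * (x - a₁ * t))) ^ n
            + (-μ * a₁ ^ 2)) x t := by
  intro x t
  unfold SolvesEq1
  set k := Real.sqrt (γ / n) with hk
  have hk2 : k ^ 2 = γ / n := Real.sq_sqrt (by positivity)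
  have hγk : γ = n * k ^ 2 := by rw [hk2]; field_simp
  set b := -μ * a₁ ^ 2 with hb
  have eX : ∀ y s : ℝ, k * (y - a₁ * s) = k * y + (-(k * a₁ * s)) := fun y s => by ring
  have eT : ∀ y s : ℝ, k * (y - a₁ * s) = (-(k * a₁)) * s + k * y := fun y s => by ring
  -- second time derivative
  have hT : ∀ y : ℝ, iteratedDeriv 2
      (fun s => a₂ * (1 / Real.cosh (k * (y - a₁ * s))) ^ n + b) t =
      a₁ ^ 2 * (k ^ 2 * (-n + n * (n + 1) * Real.tanh (k * y + (-(k * a₁ * t))) ^ 2)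
        * (a₂ * (1 / Real.cosh (k * y + (-(k * a₁ * t)))) ^ n)) := by
    intro y
    obtain ⟨h1, h2, -, -⟩ := sech_derivs n (-(k * a₁)) (k * y) a₂ b
    simp only [eT]
    rw [iteratedDeriv_succ, iteratedDeriv_one, funext fun s => (h1 s).deriv, (h2 t).deriv]
    beta_reduce
    rw [← eT, ← eX]
    ring
  obtain ⟨h1, h2, h3, h4⟩ := sech_derivs n k (-(k * a₁ * t)) a₂ b
  simp only [hT]
  simp only [eX]
  have d1 := funext fun s => (h1 s).deriv
  have d2 := funext fun s => (h2 s).deriv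
  have d3 := funext fun s => (h3 s).deriv
  have d4 := funext fun s => (h4 s).deriv
  have i1 := d1
  rw [← iteratedDeriv_one] at i1
  have i2 := (iteratedDeriv_succ (𝕜 := ℝ) (n := 1)).trans ((congrArg deriv i1).trans d2)
  have i3 := (iteratedDeriv_succ (𝕜 := ℝ) (n := 2)).trans ((congrArg deriv i2).trans d3)
  have i4 := (iteratedDeriv_succ (𝕜 := ℝ) (n := 3)).trans ((congrArg deriv i3).trans d4)
  have j2 := quad_deriv2 _ _ _ (a₁ ^ 2 * (1 + 2 * γ * μ)) γ x h1 h2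
  have m2 := (iteratedDeriv_succ (𝕜 := ℝ) (n := 1)).trans
    ((congrArg deriv ((iteratedDeriv_one).trans
      (funext fun s => ((h3 s).const_mul (a₁ ^ 2)).deriv))).trans
      (funext fun s => ((h4 s).const_mul (a₁ ^ 2)).deriv))
  norm_num only at i2 i3 i4 m2
  rw [j2, i4, i3, i2, m2, d1]
  beta_reduce
  rw [hb, hγk]
  generalize Real.tanh (k * x + (-(k * a₁ * t))) = T
  generalize (1 / Real.cosh (k * x + (-(k * a₁ * t)))) ^ n = S
  field_simp
  ring
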